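/- Define a(0) = 0 and a(n) = 4n² − 3n + 1 for n ≥ 1, and b(0) = 1/2 and b(n) = −2n³(2n+1) for n ≥ 1. Then the convergents p(n)/q(n) of the continued fraction with partial quotients (a(n), b(n)) converge to log(2) as n → ∞. -/

import Mathlib

open Filter Topology

/-!
The denominators are `q n = 2 ^ n * n! ^ 2`, and the determinant formula then turns the convergents
into the partial sums of `∑ (1/2)ₙ / (2 n · n!)`, `n ≥ 1`, where `(x)ₙ` is the rising factorial.
More generally `∑ (x)ₙ / (n (y)ₙ) = ∑ (1 / (y + k - x) - 1 / (y + k))` for `0 < x < y`: the array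
`(x)ₙ / (y + k)ₙ₊₁` (`n ≥ 1`, `k ≥ 0`) has nonnegative entries, and summing it first over `k` or
first over `n` gives the two sides, because it telescopes in either direction. For `x = 1/2` and
`y = 1` the right-hand side is twice the alternating harmonic series.
-/

section Summation

lemma hasSum_of_sub_succ_eq_of_nonneg {f g : ℕ → ℝ} {l : ℝ} (hg : ∀ n, 0 ≤ g n)
    (hfg : ∀ n, f n - f (n + 1) = g n) (hf : Tendsto f atTop (𝓝 l)) : HasSum g (f 0 - l) := by
  rw [hasSum_iff_tendsto_nat_of_nonneg hg]
  simp only [← hfg, Finset.sum_range_sub']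
  exact hf.const_sub (f 0)

lemma hasSum_comm_of_nonneg {α β : Type*} {f : α → β → ℝ} {r : α → ℝ} {c : β → ℝ} {s : ℝ}
    (hf : ∀ i j, 0 ≤ f i j) (hr : ∀ i, HasSum (f i) (r i))
    (hc : ∀ j, HasSum (fun i => f i j) (c j)) (hs : HasSum c s) : HasSum r s := by
  have hsummable : Summable fun z : β × α => f z.2 z.1 := by
    refine (summable_prod_of_nonneg fun z => hf z.2 z.1).2 ⟨fun j => (hc j).summable, ?_⟩
    simpa only [(hc _).tsum_eq] using hs.summable
  have hsum : HasSum (fun z : β × α => f z.2 z.1) s := by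
    rw [← (hsummable.hasSum.prod_fiberwise hc).unique hs]
    exact hsummable.hasSum
  exact ((Equiv.prodComm α β).hasSum_iff.2 hsum).prod_fiberwise hr

end Summation

section RisingRatio

/-- The quotient `(x)ₙ / (y)ₙ` of rising factorials `(x)ₙ = x (x + 1) ⋯ (x + n - 1)`, written as a
single product so that it can be handled factor by factor. -/
def risingRatio {K : Type*} [Field K] (x y : K) (n : ℕ) : K :=
  ∏ j ∈ Finset.range n, (x + j) / (y + j)

section Field

variable {K : Type*} [Field K] (x y : K)

@[simp]
lemma risingRatio_zero : risingRatio x y 0 = 1 := Finset.prod_range_zero _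

lemma risingRatio_succ (n : ℕ) :
    risingRatio x y (n + 1) = risingRatio x y n * ((x + n) / (y + n)) :=
  Finset.prod_range_succ _ n

end Field

section OrderedField

variable {K : Type*} [Field K] [LinearOrder K] [IsStrictOrderedRing K] {x y : K}

lemma risingRatio_pos (hx : 0 < x) (hy : 0 < y) (n : ℕ) : 0 < risingRatio x y n :=
  Finset.prod_pos fun _ _ => by positivity

lemma risingRatio_add_one_right (x : K) (hy : 0 < y) (n : ℕ) :
    risingRatio x (y + 1) n = risingRatio x y n * (y / (y + n)) := by
  induction n with
  | zero => simp [hy.ne']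
  | succ n ih =>
    have : y + 1 + n ≠ 0 := by positivity
    rw [risingRatio_succ, risingRatio_succ, ih]
    push_cast
    field_simp
    ring

lemma risingRatio_sub_succ (x : K) (hy : 0 < y) (n : ℕ) :
    risingRatio x y n - risingRatio x y (n + 1) = (y - x) * (risingRatio x y n / (y + n)) := by
  rw [risingRatio_succ]
  field_simp
  ring

lemma risingRatio_sub_add_one_right (x : K) (hy : 0 < y) (n : ℕ) :
    risingRatio x y n - risingRatio x (y + 1) n = n * (risingRatio x y n / (y + n)) := by
  rw [risingRatio_add_one_right x hy]
  field_simp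
  ring

end OrderedField

variable {x y : ℝ}

lemma GammaSeq_div_GammaSeq_mul_rpow (hx : 0 < x) (hy : 0 < y) {n : ℕ} (hn : n ≠ 0) :
    Real.GammaSeq y n / Real.GammaSeq x n * (n : ℝ) ^ (-(y - x)) = risingRatio x y (n + 1) := by
  have hn' : (0 : ℝ) < n := by positivity
  have hprod (z : ℝ) (hz : 0 < z) : ∏ j ∈ Finset.range (n + 1), (z + j) ≠ 0 :=
    Finset.prod_ne_zero_iff.2 fun _ _ => by positivity
  rw [Real.GammaSeq, Real.GammaSeq, risingRatio, Finset.prod_div_distrib, neg_sub,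
    Real.rpow_sub hn']
  have := hprod x hx
  have := hprod y hy
  field_simp

lemma tendsto_risingRatio_atTop_zero (hx : 0 < x) (hxy : x < y) :
    Tendsto (risingRatio x y) atTop (𝓝 0) := by
  have hpow : Tendsto (fun n : ℕ => (n : ℝ) ^ (-(y - x))) atTop (𝓝 0) :=
    (tendsto_rpow_neg_atTop (sub_pos.2 hxy)).comp tendsto_natCast_atTop_atTop
  have hGamma := (Real.GammaSeq_tendsto_Gamma y).div (Real.GammaSeq_tendsto_Gamma x)
    (Real.Gamma_pos_of_pos hx).ne'
  have hlim := hGamma.mul hpow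
  rw [mul_zero] at hlim
  refine (tendsto_add_atTop_iff_nat 1).1 (hlim.congr' ?_)
  filter_upwards [eventually_ne_atTop 0] with n hn
  exact GammaSeq_div_GammaSeq_mul_rpow hx (hx.trans hxy) hn

lemma tendsto_risingRatio_add_natCast_right (x y : ℝ) {n : ℕ} (hn : n ≠ 0) :
    Tendsto (fun k : ℕ => risingRatio x (y + k) n) atTop (𝓝 0) := by
  have hfactor (j : ℕ) : Tendsto (fun k : ℕ => (x + j) / (y + k + j)) atTop (𝓝 0) :=
    (tendsto_atTop_add_const_right _ _
      (tendsto_atTop_add_const_left _ _ tendsto_natCast_atTop_atTop)).const_div_atTop _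
  have hprod := tendsto_finsetProd (Finset.range n) fun j _ => hfactor j
  rwa [Finset.prod_const, Finset.card_range, zero_pow hn] at hprod

lemma hasSum_risingRatio_div_add (hx : 0 < x) (hxy : x < y) :
    HasSum (fun n : ℕ => risingRatio x y n / (y + n)) (1 / (y - x)) := by
  have hy : 0 < y := hx.trans hxy
  have hyx : 0 < y - x := sub_pos.2 hxy
  have hsum : HasSum (fun n : ℕ => (y - x) * (risingRatio x y n / (y + n))) (1 - 0) := by
    rw [← risingRatio_zero x y]
    refine hasSum_of_sub_succ_eq_of_nonneg (fun n => ?_) (risingRatio_sub_succ x hy)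
      (tendsto_risingRatio_atTop_zero hx hxy)
    have := risingRatio_pos hx hy n
    positivity
  simpa [hyx.ne'] using hsum.div_const (y - x)

lemma hasSum_risingRatio_succ_div_add (hx : 0 < x) (hxy : x < y) :
    HasSum (fun n : ℕ => risingRatio x y (n + 1) / (y + (n + 1 : ℕ)))
      (1 / (y - x) - 1 / y) := by
  simpa using (hasSum_nat_add_iff' 1).2 (hasSum_risingRatio_div_add hx hxy)

lemma hasSum_risingRatio_add_natCast_right_div (hx : 0 < x) (hy : 0 < y) {n : ℕ} (hn : n ≠ 0) :
    HasSum (fun k : ℕ => risingRatio x (y + k) n / (y + k + n)) (risingRatio x y n / n) := by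
  have hsum : HasSum (fun k : ℕ => n * (risingRatio x (y + k) n / (y + k + n)))
      (risingRatio x (y + (0 : ℕ)) n - 0) := by
    refine hasSum_of_sub_succ_eq_of_nonneg (fun k => ?_) (fun k => ?_)
      (tendsto_risingRatio_add_natCast_right x y hn)
    · have := risingRatio_pos hx (show 0 < y + k by positivity) n
      positivity
    · rw [Nat.cast_succ, ← add_assoc, risingRatio_sub_add_one_right x (by positivity)]
  simpa [hn] using hsum.div_const (n : ℝ)

/-- In terms of the digamma function, both series sum to `ψ y - ψ (y - x)`. -/
theorem hasSum_risingRatio_succ_div_of_hasSum {s : ℝ} (hx : 0 < x) (hxy : x < y)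
    (hs : HasSum (fun k : ℕ => 1 / (y + k - x) - 1 / (y + k)) s) :
    HasSum (fun n : ℕ => risingRatio x y (n + 1) / (n + 1 : ℕ)) s := by
  have hy : 0 < y := hx.trans hxy
  refine hasSum_comm_of_nonneg (fun n k => ?_)
    (fun n => hasSum_risingRatio_add_natCast_right_div hx hy n.succ_ne_zero)
    (fun k => hasSum_risingRatio_succ_div_add hx (by linarith [k.cast_nonneg (α := ℝ)])) hs
  have := risingRatio_pos hx (show 0 < y + k by positivity) (n + 1)
  positivity

end RisingRatio

section LogTwo

lemma tendsto_harmonic_mul_sub_harmonic {m : ℕ} (hm : m ≠ 0) :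
    Tendsto (fun n : ℕ => (harmonic (m * n) - harmonic n : ℝ)) atTop (𝓝 (Real.log m)) := by
  have hmul : Tendsto (fun n : ℕ => m * n) atTop atTop := tendsto_id.const_mul_atTop' hm.bot_lt
  have hlim := ((Real.tendsto_harmonic_sub_log.comp hmul).sub
    Real.tendsto_harmonic_sub_log).add_const (Real.log m)
  rw [sub_self, zero_add] at hlim
  refine hlim.congr' ?_
  filter_upwards [eventually_ne_atTop 0] with n hn
  rw [Function.comp_apply, Nat.cast_mul, Real.log_mul (by positivity) (by positivity)]
  ring

lemma sum_range_one_div_sub_one_div_eq_harmonic (n : ℕ) :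
    ∑ k ∈ Finset.range n, (1 / (1 + k - 1 / 2 : ℝ) - 1 / (1 + k)) =
      2 * (harmonic (2 * n) - harmonic n) := by
  induction n with
  | zero => simp
  | succ n ih =>
    rw [Finset.sum_range_succ, ih, show 2 * (n + 1) = 2 * n + 1 + 1 by ring]
    simp only [harmonic_succ]
    have hhalf : (1 + n - 1 / 2 : ℝ) = (2 * n + 1) / 2 := by ring
    have heven : (2 * n + 1 + 1 : ℝ) = 2 * (n + 1) := by ring
    push_cast
    rw [hhalf, heven]
    field_simp
    ring

lemma hasSum_one_div_sub_one_div_two_mul_log_two :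
    HasSum (fun k : ℕ => 1 / (1 + k - 1 / 2 : ℝ) - 1 / (1 + k)) (2 * Real.log 2) := by
  have hnonneg (k : ℕ) : 0 ≤ 1 / (1 + k - 1 / 2 : ℝ) - 1 / (1 + k) := by
    have hpos : (0 : ℝ) < 1 + k - 1 / 2 := by linarith [k.cast_nonneg (α := ℝ)]
    exact sub_nonneg.2 (one_div_le_one_div_of_le hpos (by linarith))
  rw [hasSum_iff_tendsto_nat_of_nonneg hnonneg]
  simp only [sum_range_one_div_sub_one_div_eq_harmonic]
  exact (tendsto_harmonic_mul_sub_harmonic two_ne_zero).const_mul 2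

lemma hasSum_risingRatio_half_one_log_two :
    HasSum (fun n : ℕ => risingRatio (1 / 2 : ℝ) 1 (n + 1) / (n + 1 : ℕ) / 2) (Real.log 2) := by
  have hsum := hasSum_risingRatio_succ_div_of_hasSum (by norm_num) (by norm_num)
    hasSum_one_div_sub_one_div_two_mul_log_two
  simpa only [mul_div_cancel_left₀ _ (two_ne_zero' ℝ)] using hsum.div_const 2

end LogTwo

section ContinuedFraction

lemma convergents_determinant {R : Type*} [CommRing R] {a b p q : ℕ → R}
    (hp : ∀ n, p (n + 2) = a (n + 2) * p (n + 1) + b (n + 1) * p n)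
    (hq : ∀ n, q (n + 2) = a (n + 2) * q (n + 1) + b (n + 1) * q n) (n : ℕ) :
    p (n + 1) * q n - p n * q (n + 1) =
      (p 1 * q 0 - p 0 * q 1) * ∏ i ∈ Finset.range n, -b (i + 1) := by
  induction n with
  | zero => simp
  | succ n ih =>
    rw [Finset.prod_range_succ, ← mul_assoc, ← ih, hp, hq]
    ring

lemma convergent_eq_add_sum {K : Type*} [Field K] {a b p q : ℕ → K}
    (hp : ∀ n, p (n + 2) = a (n + 2) * p (n + 1) + b (n + 1) * p n)
    (hq : ∀ n, q (n + 2) = a (n + 2) * q (n + 1) + b (n + 1) * q n)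
    (hq_ne : ∀ n, q n ≠ 0) (n : ℕ) :
    p n / q n = p 0 / q 0 + ∑ i ∈ Finset.range n,
      (p 1 * q 0 - p 0 * q 1) * (∏ j ∈ Finset.range i, -b (j + 1)) / (q i * q (i + 1)) := by
  rw [← sub_eq_iff_eq_add', ← Finset.sum_range_sub (fun n => p n / q n)]
  refine Finset.sum_congr rfl fun i _ => ?_
  rw [div_sub_div _ _ (hq_ne _) (hq_ne _), ← convergents_determinant hp hq]
  ring

open scoped Nat

lemma eq_two_pow_mul_factorial_sq_of_rec {R : Type*} [CommRing R] {q : ℕ → R}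
    (hq0 : q 0 = 1) (hq1 : q 1 = 2)
    (hq : ∀ n : ℕ, q (n + 2) = (4 * (n + 2) ^ 2 - 3 * (n + 2) + 1) * q (n + 1) -
      2 * (n + 1) ^ 3 * (2 * (n + 1) + 1) * q n) (n : ℕ) :
    q n = 2 ^ n * n ! ^ 2 := by
  induction n using Nat.twoStepInduction with
  | zero => simp [hq0]
  | one => simp [hq1]
  | more n ih ih_succ =>
    rw [hq, ih, ih_succ]
    simp only [Nat.factorial_succ]
    push_cast
    ring

lemma prod_range_eq_factorial_mul_risingRatio {K : Type*} [Field K] [CharZero K] (n : ℕ) :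
    ∏ j ∈ Finset.range n, (2 * (j + 1) ^ 3 * (2 * (j + 1) + 1) : K) =
      (2 ^ n * n ! ^ 2) * (2 ^ (n + 1) * (n + 1)! ^ 2) *
        (risingRatio (1 / 2) 1 (n + 1) / (n + 1 : ℕ)) := by
  induction n with
  | zero => simp [risingRatio_succ]
  | succ n ih =>
    have hn1 : (n + 1 : K) ≠ 0 := n.cast_add_one_ne_zero
    have hn2 : (n + 1 + 1 : K) ≠ 0 := by exact_mod_cast (n + 1).cast_add_one_ne_zero (R := K)
    rw [Finset.prod_range_succ, ih, risingRatio_succ _ _ (n + 1), add_comm (1 : K)]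
    simp only [Nat.factorial_succ]
    push_cast
    field_simp
    ring

end ContinuedFraction

theorem stmt_18 
    (a b p q : ℕ → ℝ)
    (ha0 : a 0 = 0)
    (ha : ∀ n : ℕ, 1 ≤ n → a n = 4 * (n : ℝ) ^ 2 - 3 * (n : ℝ) + 1)
    (hb0 : b 0 = 1 / 2)
    (hb : ∀ n : ℕ, 1 ≤ n → b n = -(2 * (n : ℝ) ^ 3 * (2 * (n : ℝ) + 1)))
    (hp0 : p 0 = a 0) (hq0 : q 0 = 1)
    (hp1 : p 1 = a 0 * a 1 + b 0) (hq1 : q 1 = a 1)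
    (hp : ∀ n : ℕ, p (n + 2) = a (n + 2) * p (n + 1) + b (n + 1) * p n)
    (hq : ∀ n : ℕ, q (n + 2) = a (n + 2) * q (n + 1) + b (n + 1) * q n) :
    Tendsto (fun n => p n / q n) atTop (𝓝 (Real.log 2)) := by
  have hq_eq : ∀ n : ℕ, q n = 2 ^ n * (n.factorial : ℝ) ^ 2 := by
    refine eq_two_pow_mul_factorial_sq_of_rec hq0 (by rw [hq1, ha 1 le_rfl]; norm_num) fun n => ?_
    rw [hq, ha _ (by omega), hb _ (by omega)]
    push_cast
    ring
  have hq_ne (n : ℕ) : q n ≠ 0 := by rw [hq_eq]; positivity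
  have hconv (n : ℕ) : p n / q n =
      ∑ i ∈ Finset.range n, risingRatio (1 / 2 : ℝ) 1 (i + 1) / (i + 1 : ℕ) / 2 := by
    rw [convergent_eq_add_sum hp hq hq_ne, hp0, hp1, hq0, ha0, hb0, zero_div, zero_add]
    refine Finset.sum_congr rfl fun i _ => ?_
    have hprod : ∏ j ∈ Finset.range i, -b (j + 1) =
        q i * q (i + 1) * (risingRatio (1 / 2) 1 (i + 1) / (i + 1 : ℕ)) := by
      rw [hq_eq, hq_eq, ← prod_range_eq_factorial_mul_risingRatio]
      exact Finset.prod_congr rfl fun j _ => by rw [hb _ (by omega)]; push_cast; ring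
    rw [hprod, div_eq_iff (mul_ne_zero (hq_ne _) (hq_ne _))]
    ring
  simpa only [hconv] using hasSum_risingRatio_half_one_log_two.tendsto_sum_nat
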